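/- arXiv:2507.01795 — 6 statements merged into one kernel-verified Lean document; each statement's English description precedes it below -/
import Mathlib

section
/- Let H be a real symmetric positive definite p×p matrix and let A₁, …, A_d be real p×p matrices such that H·A_j is symmetric for each j = 1, …, d. Then for every vector ν = (ν₁, …, ν_d) ∈ ℝ^d, the matrix A(ν) = Σ_{j=1}^d ν_j A_j is diagonalizable over ℝ: there exist an invertible real matrix R and a real diagonal matrix Λ with A(ν) = R Λ R⁻¹. In particular A(ν) has p real eigenvalues and a complete set of linearly independent eigenvectors. -/
/-!
The set of `M` with `H * M` symmetric is a linear subspace, so it contains `A(ν) = ∑ j, ν j • A j`.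
Factoring the positive definite matrix as `H = yᴴ * y` with `y` invertible, the conjugate
`y * A(ν) * y⁻¹ = (y⁻¹)ᴴ * (H * A(ν)) * y⁻¹` is congruent to a symmetric matrix, hence symmetric,
and the spectral theorem diagonalizes it.
-/

open Matrix

open scoped MatrixOrder Matrix.Norms.L2Operator in
/-- A positive definite matrix is `yᴴ * y` for an invertible `y`; the square root of `H` is one
choice, but only this factorization matters for the similarity. -/
lemma exists_factor_of_posDef {p : ℕ} {H : Matrix (Fin p) (Fin p) ℝ} (hH : H.PosDef) :
    ∃ y : Matrix (Fin p) (Fin p) ℝ, IsUnit y ∧ H = yᴴ * y :=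
  CStarAlgebra.isStrictlyPositive_iff_eq_star_mul_self.mp hH.isStrictlyPositive

/-- A matrix symmetrized by a positive definite `H` is diagonalizable, since it is similar to a
symmetric matrix through any factor `y` of `H = yᴴ * y`. -/
lemma diagonalizable_of_posDef_mul_isSymm {p : ℕ} {H M : Matrix (Fin p) (Fin p) ℝ}
    (hH : H.PosDef) (hM : (H * M).IsSymm) :
    ∃ R Λ : Matrix (Fin p) (Fin p) ℝ, IsUnit R ∧ Λ.IsDiag ∧ M = R * Λ * R⁻¹ := by
  obtain ⟨y, hy, rfl⟩ := exists_factor_of_posDef hH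
  have hyd : IsUnit y.det := (isUnit_iff_isUnit_det y).mp hy
  have hyy : y⁻¹ * y = 1 := nonsing_inv_mul y hyd
  have hyy' : y * y⁻¹ = 1 := mul_nonsing_inv y hyd
  have hMh : (yᴴ * y * M).IsHermitian := by
    rw [IsHermitian, conjTranspose_eq_transpose_of_trivial]
    exact hM
  have hcong : (y⁻¹)ᴴ * (yᴴ * y * M) * y⁻¹ = y * M * y⁻¹ := by
    have h : (y⁻¹)ᴴ * yᴴ = 1 := by rw [← conjTranspose_mul, hyy', conjTranspose_one]
    simp only [← mul_assoc, h, one_mul]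
  have hS : (y * M * y⁻¹).IsHermitian :=
    hcong ▸ isHermitian_conjTranspose_mul_mul y⁻¹ hMh
  set U : Matrix (Fin p) (Fin p) ℝ := hS.eigenvectorUnitary.1 with hU
  have hUU : U * star U = 1 := Unitary.coe_mul_star_self hS.eigenvectorUnitary
  have hspec := hS.spectral_theorem
  rw [Unitary.conjStarAlgAut_apply, ← hU] at hspec
  -- Eigenvectors of `M` are the columns of `y⁻¹ * U`, where the columns of `U` are
  -- orthonormal eigenvectors of the symmetric conjugate.
  have hinv : y⁻¹ * U * (star U * y) = 1 := by
    calc y⁻¹ * U * (star U * y) = y⁻¹ * (U * star U) * y := by simp only [mul_assoc]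
      _ = 1 := by rw [hUU, mul_one, hyy]
  refine ⟨y⁻¹ * U, diagonal (RCLike.ofReal ∘ hS.eigenvalues),
    IsUnit.of_mul_eq_one _ hinv, isDiag_diagonal _, ?_⟩
  rw [inv_eq_right_inv hinv]
  calc M = y⁻¹ * y * M * (y⁻¹ * y) := by rw [hyy, one_mul, mul_one]
    _ = y⁻¹ * (y * M * y⁻¹) * y := by simp only [mul_assoc]
    _ = y⁻¹ * (U * diagonal (RCLike.ofReal ∘ hS.eigenvalues) * star U) * y :=
      congrArg (fun X => y⁻¹ * X * y) hspec
    _ = _ := by simp only [mul_assoc]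

/-- If `H` is symmetric positive definite and each `H·A j` is symmetric, then every
real linear combination `Σ ν j • A j` is diagonalizable over ℝ. -/
theorem symmetrizable_implies_diagonalizable {p d : ℕ}
    (H : Matrix (Fin p) (Fin p) ℝ) (hH : H.PosDef)
    (A : Fin d → Matrix (Fin p) (Fin p) ℝ)
    (hA : ∀ j, (H * A j).IsSymm) (ν : Fin d → ℝ) :
    ∃ R Λ : Matrix (Fin p) (Fin p) ℝ, IsUnit R ∧ Λ.IsDiag ∧
      (∑ j, ν j • A j) = R * Λ * R⁻¹ := by
  apply diagonalizable_of_posDef_mul_isSymm hH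
  rw [IsSymm, Finset.mul_sum, transpose_sum]
  refine Finset.sum_congr rfl fun j _ => ?_
  rw [mul_smul_comm, transpose_smul, (hA j).eq]
end

section
/- Let P be a real symmetric positive definite p×p matrix and let A be a real p×p matrix such that A·P is symmetric. Then there exist an invertible real matrix R and a real diagonal matrix Λ such that A = R Λ R⁻¹ and P = R Rᵀ. -/
/-!
Factor `P = B Bᵀ` with `B` invertible. Then `B⁻¹ A B = B⁻¹ (A P) B⁻ᵀ` is congruent to the symmetric
matrix `A P`, so the spectral theorem gives `B⁻¹ A B = U Λ Uᵀ` with `U` orthogonal. The matrix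
`R = B U` diagonalizes `A`, and `R Rᵀ = B U Uᵀ Bᵀ = P`.
-/

open Matrix

/-- The real spectral theorem in the form `S = U Λ Uᵀ` with `U` orthogonal. -/
theorem exists_orthogonal_diagonalization {p : ℕ} (S : Matrix (Fin p) (Fin p) ℝ) (hS : S.IsSymm) :
    ∃ (U : Matrix (Fin p) (Fin p) ℝ) (d : Fin p → ℝ),
      U * Uᵀ = 1 ∧ S = U * diagonal d * Uᵀ := by
  have hH : S.IsHermitian := by
    rw [Matrix.IsHermitian, conjTranspose_eq_transpose_of_trivial]
    exact hS
  refine ⟨hH.eigenvectorUnitary, hH.eigenvalues, ?_, ?_⟩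
  · rw [← conjTranspose_eq_transpose_of_trivial, ← star_eq_conjTranspose]
    exact Unitary.coe_mul_star_self hH.eigenvectorUnitary
  · have h := hH.spectral_theorem
    rw [Unitary.conjStarAlgAut_apply, star_eq_conjTranspose,
      conjTranspose_eq_transpose_of_trivial] at h
    exact h

open scoped MatrixOrder Matrix.Norms.L2Operator in
theorem exists_eq_mul_transpose {p : ℕ} (P : Matrix (Fin p) (Fin p) ℝ) (hP : P.PosDef) :
    ∃ B : Matrix (Fin p) (Fin p) ℝ, P = B * Bᵀ := by
  obtain ⟨B, hB⟩ := CStarAlgebra.nonneg_iff_eq_mul_star_self.mp hP.posSemidef.nonneg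
  refine ⟨B, ?_⟩
  rwa [star_eq_conjTranspose, conjTranspose_eq_transpose_of_trivial] at hB

/-- Barth's eigenvector-scaling theorem: if `P` is symmetric positive definite and
`A·P` is symmetric, then there are an invertible `R` and a real diagonal `Λ` with
`A = R Λ R⁻¹` and `P = R Rᵀ`. -/
theorem barth_eigenvector_scaling {p : ℕ}
    (P A : Matrix (Fin p) (Fin p) ℝ) (hP : P.PosDef) (hAP : (A * P).IsSymm) :
    ∃ R Λ : Matrix (Fin p) (Fin p) ℝ, IsUnit R ∧ Λ.IsDiag ∧
      A = R * Λ * R⁻¹ ∧ P = R * Rᵀ := by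
  obtain ⟨B, hB⟩ := exists_eq_mul_transpose P hP
  have hBdet : IsUnit B.det := by
    have h := hP.det_pos.ne'
    rw [hB, det_mul] at h
    exact (left_ne_zero_of_mul h).isUnit
  have hBtdet : IsUnit Bᵀ.det := by rwa [det_transpose]
  have hS_eq : B⁻¹ * A * B = B⁻¹ * (A * P) * (B⁻¹)ᵀ := by
    rw [hB, transpose_nonsing_inv]
    simp only [Matrix.mul_assoc]
    rw [mul_nonsing_inv _ hBtdet, Matrix.mul_one]
  have hS : (B⁻¹ * A * B).IsSymm := by
    rw [hS_eq, Matrix.IsSymm, transpose_mul, transpose_mul, transpose_transpose, hAP.eq,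
      ← Matrix.mul_assoc]
  obtain ⟨U, d, hU, hSU⟩ := exists_orthogonal_diagonalization _ hS
  have hUinv : U⁻¹ = Uᵀ := inv_eq_right_inv hU
  have hUunit : IsUnit U := IsUnit.of_mul_eq_one _ hU
  refine ⟨B * U, diagonal d, ((isUnit_iff_isUnit_det B).mpr hBdet).mul hUunit,
    isDiag_diagonal d, ?_, ?_⟩
  · calc A = B * (B⁻¹ * A * B) * B⁻¹ := by
          simp only [Matrix.mul_assoc]
          rw [mul_nonsing_inv _ hBdet, Matrix.mul_one, mul_nonsing_inv_cancel_left _ _ hBdet]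
      _ = B * U * diagonal d * (B * U)⁻¹ := by
          rw [hSU, Matrix.mul_inv_rev, hUinv]
          simp only [Matrix.mul_assoc]
  · rw [transpose_mul, Matrix.mul_assoc, ← Matrix.mul_assoc U, hU, Matrix.one_mul, hB]
end

section
/- Let g : ℝ^p → ℝ^p be continuously differentiable and let G : ℝ^p → ℝ be differentiable with ∇G(v) = (Dg(v))ᵀ v for all v ∈ ℝ^p, and let ψ(v) = ⟨v, g(v)⟩ − G(v). Then for all a, b ∈ ℝ^p, ⟨b − a, ∫₀¹ g(a + ξ(b − a)) dξ⟩ = ψ(b) − ψ(a). In other words, the entropy-conservative two-point flux g*(a,b) = ∫₀¹ g(a + ξ(b − a)) dξ satisfies Tadmor's jump condition [[v]]ᵀ g* = [[ψ]]. -/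
/-!
Along the segment `v(ξ) = a + ξ (b - a)` the entropy potential `ψ(v) = ⟨v, g(v)⟩ - G(v)` satisfies
`d/dξ ψ(v(ξ)) = ⟨b - a, g(v(ξ))⟩`, because the compatibility condition makes the term
`⟨v, Dg(v) (b - a)⟩` of the product rule cancel the derivative of `G`
(`hasDerivAt_potential_line`). Integrating over `[0, 1]` by the fundamental theorem of calculus,
and moving the pairing with `b - a` inside the integral, gives the jump condition.
-/

open Matrix

/-- Jacobian matrix of a map `g : ℝ^p → ℝ^p` at a point. -/
noncomputable def jac {p : ℕ} (g : (Fin p → ℝ) → (Fin p → ℝ)) (v : Fin p → ℝ) :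
    Matrix (Fin p) (Fin p) ℝ :=
  Matrix.of fun i k => fderiv ℝ g v (Pi.single k 1) i

/-- Gradient (as a column vector) of a scalar function on ℝ^p. -/
noncomputable def grad {p : ℕ} (G : (Fin p → ℝ) → ℝ) (v : Fin p → ℝ) : Fin p → ℝ :=
  fun k => fderiv ℝ G v (Pi.single k 1)

/-- The compatibility condition `∇G = (Dg)ᵀ v` in directional form: `DG(v) w = ⟨v, Dg(v) w⟩`. -/
theorem fderiv_eq_dotProduct_of_compat {p : ℕ}
    {g : (Fin p → ℝ) → (Fin p → ℝ)} {G : (Fin p → ℝ) → ℝ} {v : Fin p → ℝ}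
    (h : grad G v = (jac g v)ᵀ *ᵥ v) (w : Fin p → ℝ) :
    fderiv ℝ G v w = v ⬝ᵥ fderiv ℝ g v w := by
  have key : (fderiv ℝ G v).toLinearMap =
      (dotProductBilin ℝ ℝ v : (Fin p → ℝ) →ₗ[ℝ] ℝ) ∘ₗ (fderiv ℝ g v).toLinearMap := by
    refine (Pi.basisFun ℝ (Fin p)).ext fun k => ?_
    have := congrFun h k
    simp only [grad, jac, mulVec, transpose_apply, of_apply, dotProduct] at this
    simp [this, dotProduct, mul_comm]
  exact LinearMap.congr_fun key w

/-- The entropy potential `ψ = ⟨v, g(v)⟩ - G(v)` has derivative `⟨d, g(v)⟩` along the line of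
direction `d`: the product-rule term `⟨v, Dg(v) d⟩` cancels `DG(v) d`. -/
theorem hasDerivAt_potential_line {p : ℕ}
    {g : (Fin p → ℝ) → (Fin p → ℝ)} {G : (Fin p → ℝ) → ℝ}
    (hg : Differentiable ℝ g) (hG : Differentiable ℝ G)
    (hcompat : ∀ v, grad G v = (jac g v)ᵀ *ᵥ v) (a d : Fin p → ℝ) (ξ : ℝ) :
    HasDerivAt (fun t : ℝ => (a + t • d) ⬝ᵥ g (a + t • d) - G (a + t • d))
      (d ⬝ᵥ g (a + ξ • d)) ξ := by
  have hl : HasDerivAt (fun t : ℝ => a + t • d) d ξ := by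
    simpa using ((hasDerivAt_id ξ).smul_const d).const_add a
  have hgl := (hg (a + ξ • d)).hasFDerivAt.comp_hasDerivAt ξ hl
  have hGl := (hG (a + ξ • d)).hasFDerivAt.comp_hasDerivAt ξ hl
  have hdot := HasDerivAt.fun_sum (u := Finset.univ) fun i _ =>
    (hasDerivAt_pi.1 hl i).mul (hasDerivAt_pi.1 hgl i)
  refine (hdot.sub hGl).congr_deriv ?_
  rw [fderiv_eq_dotProduct_of_compat (hcompat _)]
  simp [dotProduct, Finset.sum_add_distrib]

/-- Tadmor's jump condition for the entropy-conservative two-point flux: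
`[[v]]ᵀ g*(a,b) = ψ(b) − ψ(a)` where `ψ(v) = ⟨v, g(v)⟩ − G(v)` is the entropy potential. -/
theorem tadmor_jump_condition {p : ℕ}
    (g : (Fin p → ℝ) → (Fin p → ℝ)) (G : (Fin p → ℝ) → ℝ)
    (hg : ContDiff ℝ 1 g) (hG : Differentiable ℝ G)
    (hcompat : ∀ v, grad G v = (jac g v)ᵀ *ᵥ v) :
    ∀ a b : Fin p → ℝ,
      (b - a) ⬝ᵥ (∫ ξ in (0:ℝ)..1, g (a + ξ • (b - a))) =
        (b ⬝ᵥ g b - G b) - (a ⬝ᵥ g a - G a) := by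
  intro a b
  have hcont : Continuous fun ξ : ℝ => g (a + ξ • (b - a)) :=
    hg.continuous.comp (by fun_prop)
  have hpair := (LinearMap.toContinuousLinearMap
    (dotProductBilin ℝ ℝ (b - a) : (Fin p → ℝ) →ₗ[ℝ] ℝ)).intervalIntegral_comp_comm
      (hcont.intervalIntegrable (μ := MeasureTheory.volume) 0 1)
  have hftc := intervalIntegral.integral_eq_sub_of_hasDerivAt (a := 0) (b := 1)
    (fun ξ _ => hasDerivAt_potential_line (hg.differentiable one_ne_zero) hG hcompat a (b - a) ξ)
    ((continuous_const.dotProduct hcont).intervalIntegrable 0 1)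
  simp only [LinearMap.coe_toContinuousLinearMap', dotProductBilin_apply_apply] at hpair
  rw [← hpair, hftc]
  simp
end

section
/- Let g : ℝ^p → ℝ^p be continuously differentiable and G : ℝ^p → ℝ differentiable with ∇G(v) = (Dg(v))ᵀ v for all v. Let U : ℝ^p → ℝ^p be differentiable and E : ℝ^p → ℝ differentiable with ∇E(v) = (DU(v))ᵀ v for all v. Define g*(x,y) = ∫₀¹ g(x + ξ(y − x)) dξ and G*(x,y) = ½(x + y)ᵀ g*(x,y) + ½(G(x) + G(y)) − ½(xᵀ g(x) + yᵀ g(y)). Let Δx > 0, let a, b, c : ℝ → ℝ^p be differentiable, and let D₊, D₋ : ℝ → Matrix(p,p,ℝ) be (not necessarily symmetric) matrix-valued functions. Define the fluxes f̂₊(t) = g*(b(t), c(t)) − ½ D₊(t)(c(t) − b(t)) and f̂₋(t) = g*(a(t), b(t)) − ½ D₋(t)(b(t) − a(t)), and the numerical entropy fluxes Ĝ₊(t) = G*(b(t), c(t)) − ¼ (b(t)+c(t))ᵀ D₊(t)(c(t) − b(t)) and Ĝ₋(t) = G*(a(t), b(t)) − ¼ (a(t)+b(t))ᵀ D₋(t)(b(t)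 − a(t)). If for all t, (d/dt) U(b(t)) = −(1/Δx)[f̂₊(t) − f̂₋(t)], then for all t, (d/dt) E(b(t)) + (1/Δx)[Ĝ₊(t) − Ĝ₋(t)] = −(1/(4Δx)) [ (c(t) − b(t))ᵀ D₊(t)(c(t) − b(t)) + (b(t) − a(t))ᵀ D₋(t)(b(t) − a(t)) ]. -/
/-!
Pairing the scheme with the entropy variable `b` turns `d/dt U(b)` into `d/dt E(b)`, because
`∇E(v) = (DU(v))ᵀ v` says `dE(v) h = v · dU(v) h`.  The same compatibility for `(g, G)` shows that
the entropy potential `ψ(v) = v · g(v) - G(v)` has differential `h ↦ h · g(v)`; integrating along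
the segment from `x` to `y` gives Tadmor's condition `(y - x) · g*(x, y) = ψ(y) - ψ(x)`.
Therefore `G*(b, c) - b · g*(b, c) = -ψ(b) = G*(a, b) - b · g*(a, b)`, so the conservative parts
cancel, and the diffusion terms leave exactly the two quadratic forms.
-/

open Matrix

/-- Tadmor's second-order entropy-conservative two-point flux. -/
noncomputable def gstar {p : ℕ} (g : (Fin p → ℝ) → (Fin p → ℝ))
    (x y : Fin p → ℝ) : Fin p → ℝ :=
  ∫ ξ in (0:ℝ)..1, g (x + ξ • (y - x))

/-- The numerical entropy flux associated with the entropy-conservative flux `g*`. -/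
noncomputable def Gstar {p : ℕ} (g : (Fin p → ℝ) → (Fin p → ℝ)) (G : (Fin p → ℝ) → ℝ)
    (x y : Fin p → ℝ) : ℝ :=
  (1/2) * ((x + y) ⬝ᵥ gstar g x y) + (1/2) * (G x + G y)
    - (1/2) * (x ⬝ᵥ g x + y ⬝ᵥ g y)

/-- The matrix relation `∇G(v) = (Dg(v))ᵀ v` in terms of Fréchet derivatives. -/
lemma fderiv_eq_dotProduct_of_grad_eq {p : ℕ} {g : (Fin p → ℝ) → (Fin p → ℝ)}
    {G : (Fin p → ℝ) → ℝ} {v : Fin p → ℝ} (hv : grad G v = (jac g v)ᵀ *ᵥ v) (h : Fin p → ℝ) :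
    fderiv ℝ G v h = v ⬝ᵥ fderiv ℝ g v h := by
  have key : ∀ k, fderiv ℝ G v (Pi.single k 1) = v ⬝ᵥ fderiv ℝ g v (Pi.single k 1) := by
    intro k
    have := congrFun hv k
    simpa [grad, jac, Matrix.mulVec, dotProduct, mul_comm] using this
  rw [pi_eq_sum_univ' h]
  simp only [map_sum, map_smul, dotProduct_sum, dotProduct_smul]
  refine Finset.sum_congr rfl fun k _ => ?_
  rw [key]

/-- Tadmor's condition: the jump of `v` against `g*` is the jump of the entropy potential
`v · g(v) - G(v)`. -/
lemma sub_dotProduct_gstar {p : ℕ} {g : (Fin p → ℝ) → (Fin p → ℝ)} {G : (Fin p → ℝ) → ℝ}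
    (hg : ContDiff ℝ 1 g) (hG : Differentiable ℝ G)
    (hcompat : ∀ v, grad G v = (jac g v)ᵀ *ᵥ v) (x y : Fin p → ℝ) :
    (y - x) ⬝ᵥ gstar g x y = (y ⬝ᵥ g y - G y) - (x ⬝ᵥ g x - G x) := by
  have hgd : Differentiable ℝ g := hg.differentiable one_ne_zero
  have hcont : Continuous fun ξ : ℝ => g (x + ξ • (y - x)) :=
    hg.continuous.comp (by fun_prop)
  have hγ : ∀ ξ : ℝ, HasDerivAt (fun ξ : ℝ => x + ξ • (y - x)) (y - x) ξ := by
    intro ξ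
    simpa using ((hasDerivAt_id ξ).smul_const (y - x)).const_add x
  have hψ : ∀ ξ : ℝ, HasDerivAt
      (fun ξ : ℝ => (x + ξ • (y - x)) ⬝ᵥ g (x + ξ • (y - x)) - G (x + ξ • (y - x)))
      ((y - x) ⬝ᵥ g (x + ξ • (y - x))) ξ := by
    intro ξ
    have h1 := (hgd (x + ξ • (y - x))).hasFDerivAt.comp_hasDerivAt ξ (hγ ξ)
    have h2 := (hG (x + ξ • (y - x))).hasFDerivAt.comp_hasDerivAt ξ (hγ ξ)
    have h3 := HasDerivAt.fun_sum (u := Finset.univ) fun i _ =>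
      ((hasDerivAt_pi.1 (hγ ξ)) i).mul ((hasDerivAt_pi.1 h1) i)
    refine (h3.sub h2).congr_deriv ?_
    rw [fderiv_eq_dotProduct_of_grad_eq (hcompat _), Finset.sum_add_distrib]
    exact add_sub_cancel_right _ _
  have hdot : (y - x) ⬝ᵥ gstar g x y = ∫ ξ in (0 : ℝ)..1, (y - x) ⬝ᵥ g (x + ξ • (y - x)) := by
    let L : (Fin p → ℝ) →L[ℝ] ℝ := LinearMap.toContinuousLinearMap (dotProductBilin ℝ ℝ (y - x))
    exact (L.intervalIntegral_comp_comm (hcont.intervalIntegrable 0 1)).symm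
  have hcont' : Continuous fun ξ : ℝ => (y - x) ⬝ᵥ g (x + ξ • (y - x)) :=
    continuous_const.dotProduct hcont
  rw [hdot, intervalIntegral.integral_eq_sub_of_hasDerivAt (fun ξ _ => hψ ξ)
    (hcont'.intervalIntegrable 0 1)]
  simp

/-- Exact entropy-dissipation identity for schemes obtained by adding diffusion
`−½ D [[v]]` to an entropy-conservative flux. -/
theorem entropy_dissipation_identity {p : ℕ}
    (g : (Fin p → ℝ) → (Fin p → ℝ)) (G : (Fin p → ℝ) → ℝ)
    (hg : ContDiff ℝ 1 g) (hG : Differentiable ℝ G)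
    (hcompat : ∀ v, grad G v = (jac g v)ᵀ *ᵥ v)
    (U : (Fin p → ℝ) → (Fin p → ℝ)) (E : (Fin p → ℝ) → ℝ)
    (hU : Differentiable ℝ U) (hE : Differentiable ℝ E)
    (hEU : ∀ v, grad E v = (jac U v)ᵀ *ᵥ v)
    (Δx : ℝ) (hΔx : 0 < Δx)
    (a b c : ℝ → (Fin p → ℝ))
    (ha : Differentiable ℝ a) (hb : Differentiable ℝ b) (hc : Differentiable ℝ c)
    (Dp Dm : ℝ → Matrix (Fin p) (Fin p) ℝ)
    (fhatp fhatm : ℝ → (Fin p → ℝ)) (Ghatp Ghatm : ℝ → ℝ)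
    (hfp : ∀ t, fhatp t = gstar g (b t) (c t) - (1/2 : ℝ) • (Dp t *ᵥ (c t - b t)))
    (hfm : ∀ t, fhatm t = gstar g (a t) (b t) - (1/2 : ℝ) • (Dm t *ᵥ (b t - a t)))
    (hGp : ∀ t, Ghatp t = Gstar g G (b t) (c t)
        - (1/4) * ((b t + c t) ⬝ᵥ (Dp t *ᵥ (c t - b t))))
    (hGm : ∀ t, Ghatm t = Gstar g G (a t) (b t)
        - (1/4) * ((a t + b t) ⬝ᵥ (Dm t *ᵥ (b t - a t))))
    (hscheme : ∀ t, deriv (fun s => U (b s)) t = -(1/Δx) • (fhatp t - fhatm t)) :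
    ∀ t, deriv (fun s => E (b s)) t + (1/Δx) * (Ghatp t - Ghatm t) =
      -(1/(4*Δx)) * ((c t - b t) ⬝ᵥ (Dp t *ᵥ (c t - b t))
        + (b t - a t) ⬝ᵥ (Dm t *ᵥ (b t - a t))) := by
  intro t
  have hbt := (hb t).hasDerivAt
  have hUb : deriv (fun s => U (b s)) t = fderiv ℝ U (b t) (deriv b t) :=
    ((hU (b t)).hasFDerivAt.comp_hasDerivAt t hbt).deriv
  have hEb : deriv (fun s => E (b s)) t = fderiv ℝ E (b t) (deriv b t) :=
    ((hE (b t)).hasFDerivAt.comp_hasDerivAt t hbt).deriv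
  have h1 := sub_dotProduct_gstar hg hG hcompat (b t) (c t)
  have h2 := sub_dotProduct_gstar hg hG hcompat (a t) (b t)
  rw [hEb, fderiv_eq_dotProduct_of_grad_eq (hEU _), ← hUb, hscheme, hfp, hfm, hGp, hGm]
  simp only [Gstar]
  -- Only the vectors `D (v_right - v_left)` matter, not their linear dependence on the jumps.
  generalize Dp t *ᵥ (c t - b t) = P
  generalize Dm t *ᵥ (b t - a t) = M
  simp only [dotProduct_smul, dotProduct_sub, sub_dotProduct, add_dotProduct, smul_eq_mul] at *
  have hx : Δx ≠ 0 := hΔx.ne'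
  field_simp
  linarith
end

section
/- Let g : ℝ^p → ℝ^p be continuously differentiable and let G : ℝ^p → ℝ be differentiable with ∇G(v) = (Dg(v))ᵀ v for all v ∈ ℝ^p. Then the Jacobian Dg(v) is a symmetric matrix for every v ∈ ℝ^p. -/
/-!
The map `g` is the gradient of the entropy potential `ψ v = ⟨v, g v⟩ - G v`: the product rule gives
`∇ψ v = g v + (Dg v)ᵀ v - ∇G v`, and the last two terms cancel by the compatibility condition.
Hence `Dg v` is the Hessian of `ψ`, which is symmetric because `∇ψ = g` is differentiable.
-/

open Matrix

/-- The derivative of the entropy potential at `v` is the linear form `w ↦ ⟨w, g v⟩`. -/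
theorem hasFDerivAt_potential {p : ℕ}
    {g : (Fin p → ℝ) → (Fin p → ℝ)} {G : (Fin p → ℝ) → ℝ}
    (hg : Differentiable ℝ g) (hG : Differentiable ℝ G)
    (hcompat : ∀ v, grad G v = (jac g v)ᵀ *ᵥ v) (v : Fin p → ℝ) :
    HasFDerivAt (fun v => ∑ i, v i * g v i - G v)
      (∑ i, g v i • ContinuousLinearMap.proj (R := ℝ) (φ := fun _ : Fin p => ℝ) i) v := by
  have hgi (i : Fin p) : HasFDerivAt (fun v => g v i)
      ((ContinuousLinearMap.proj i).comp (fderiv ℝ g v)) v :=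
    hasFDerivAt_pi'.1 (hg v).hasFDerivAt i
  have h := (HasFDerivAt.fun_sum (u := Finset.univ) fun i _ =>
    (hasFDerivAt_apply (𝕜 := ℝ) i v).mul (hgi i)).sub (hG v).hasFDerivAt
  refine h.congr_fderiv ?_
  -- It suffices to compare the two linear forms on the standard basis.
  refine ContinuousLinearMap.coe_injective (LinearMap.pi_ext' fun k => LinearMap.ext_ring ?_)
  have hk := congrFun (hcompat v) k
  simp only [grad, jac, mulVec, dotProduct, transpose_apply, of_apply] at hk
  simp [hk, Finset.sum_add_distrib, mul_comm]

/-- If `∇G(v) = (Dg(v))ᵀ v` for all `v`, then the Jacobian `Dg(v)` is symmetric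
for every `v`: the conservation law in entropy variables is in symmetrized form. -/
theorem jacobian_symm_of_compat {p : ℕ}
    (g : (Fin p → ℝ) → (Fin p → ℝ)) (G : (Fin p → ℝ) → ℝ)
    (hg : ContDiff ℝ 1 g) (hG : Differentiable ℝ G)
    (hcompat : ∀ v, grad G v = (jac g v)ᵀ *ᵥ v) :
    ∀ v, (jac g v).IsSymm := by
  intro v
  have hgd : Differentiable ℝ g := hg.differentiable one_ne_zero
  have hgi (i : Fin p) : HasFDerivAt (fun v => g v i)
      ((ContinuousLinearMap.proj i).comp (fderiv ℝ g v)) v :=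
    hasFDerivAt_pi'.1 (hgd v).hasFDerivAt i
  have h2 := HasFDerivAt.fun_sum (u := Finset.univ) fun i _ =>
    (hgi i).smul_const (ContinuousLinearMap.proj (R := ℝ) (φ := fun _ : Fin p => ℝ) i)
  ext i k
  have h := second_derivative_symmetric (hasFDerivAt_potential hgd hG hcompat) h2
    (Pi.single i 1) (Pi.single k 1)
  simpa [jac, Pi.single_apply] using h
end

section
/- Fix layer dimensions d₀, d₁, …, d_L and let σ : ℝ → ℝ be convex and monotone nondecreasing. Let W^{z,(l)} ∈ ℝ^{d_l × d_{l−1}} have all entries nonnegative, let W^{x,(l)} ∈ ℝ^{d_l × d₀} and b^{(l)} ∈ ℝ^{d_l} be arbitrary for l = 1, …, L−1, and let W^{(L)} ∈ ℝ^{d_L × d_{L−1}} have all entries nonnegative and b^{(L)} ∈ ℝ^{d_L}. Define z^{(0)}(x) = x and, for l = 1, …, L−1, z^{(l)}(x) = σ(W^{z,(l)} z^{(l−1)}(x) + W^{x,(l)} x + b^{(l)}) with σ applied componentwise, and y(x) = W^{(L)} z^{(L−1)}(x) + b^{(L)}. Then every component of every hidden layer, x ↦ z^{(l)}_i(x), is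 a convex function on ℝ^{d₀}, and every component of the output, x ↦ y_i(x), is a convex function on ℝ^{d₀}. -/
/-!
Nonnegative combinations of convex functions are convex, adding an affine function preserves
convexity, and composing a convex function with a convex nondecreasing `σ` preserves convexity.
Hence convexity of the components propagates from each layer to the next; it holds for the
input layer because coordinates are linear. The output is one more nonnegative combination plus
a constant.
-/

open Matrix

/-- The layers of an input convex neural network (ICNN): `icnn σ dim Wz Wx b l x`
is the `l`-th layer value `z^{(l)}(x)`, where `z^{(0)}(x) = x` and
`z^{(l+1)}(x) = σ(W^{z,(l+1)} z^{(l)}(x) + W^{x,(l+1)} x + b^{(l+1)})` componentwise.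
Here `Wz l`, `Wx l`, `b l` are the parameters producing layer `l+1` from layer `l`. -/
noncomputable def icnn (σ : ℝ → ℝ) (dim : ℕ → ℕ)
    (Wz : (l : ℕ) → Matrix (Fin (dim (l+1))) (Fin (dim l)) ℝ)
    (Wx : (l : ℕ) → Matrix (Fin (dim (l+1))) (Fin (dim 0)) ℝ)
    (b : (l : ℕ) → Fin (dim (l+1)) → ℝ) :
    (l : ℕ) → (Fin (dim 0) → ℝ) → Fin (dim l) → ℝ
  | 0 => fun x => x
  | l+1 => fun x i => σ ((Wz l *ᵥ icnn σ dim Wz Wx b l x + Wx l *ᵥ x + b l) i)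

theorem convexOn_mulVec_of_nonneg {E : Type*} [AddCommGroup E] [Module ℝ E] {m n : ℕ}
    (W : Matrix (Fin m) (Fin n) ℝ) (hW : ∀ i j, 0 ≤ W i j) (f : E → Fin n → ℝ)
    (hf : ∀ j, ConvexOn ℝ Set.univ (fun x => f x j)) (i : Fin m) :
    ConvexOn ℝ Set.univ (fun x => (W *ᵥ f x) i) := by
  refine ⟨convex_univ, fun x hx y hy a c ha hc hac => ?_⟩
  simp only [Matrix.mulVec, dotProduct, smul_eq_mul, Finset.mul_sum, ← Finset.sum_add_distrib]
  refine Finset.sum_le_sum fun j _ => ?_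
  have h := mul_le_mul_of_nonneg_left ((hf j).2 hx hy ha hc hac) (hW i j)
  simp only [smul_eq_mul] at h
  linarith

theorem convexOn_icnn (σ : ℝ → ℝ) (hσconv : ConvexOn ℝ Set.univ σ) (hσmono : Monotone σ)
    (dim : ℕ → ℕ)
    (Wz : (l : ℕ) → Matrix (Fin (dim (l+1))) (Fin (dim l)) ℝ)
    (Wx : (l : ℕ) → Matrix (Fin (dim (l+1))) (Fin (dim 0)) ℝ)
    (b : (l : ℕ) → Fin (dim (l+1)) → ℝ)
    (N : ℕ) (hWz : ∀ l, l + 1 ≤ N → ∀ i j, 0 ≤ Wz l i j) (l : ℕ) (hl : l ≤ N)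
    (i : Fin (dim l)) : ConvexOn ℝ Set.univ (fun x => icnn σ dim Wz Wx b l x i) := by
  induction l with
  | zero => exact (LinearMap.proj (R := ℝ) (φ := fun _ : Fin (dim 0) => ℝ) i).convexOn convex_univ
  | succ l ih =>
    have hz := convexOn_mulVec_of_nonneg (Wz l) (hWz l hl) _ (fun j => ih (by omega) j) i
    have hx : ConvexOn ℝ Set.univ (fun x => (Wx l *ᵥ x) i) :=
      ((LinearMap.proj (R := ℝ) (φ := fun _ : Fin (dim (l+1)) => ℝ) i).comp
        (Wx l).mulVecLin).convexOn convex_univ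
    have h := (hz.add hx).add_const (b l i)
    refine ⟨convex_univ, fun x hx y hy a c ha hc hac => ?_⟩
    exact (hσmono (h.2 hx hy ha hc hac)).trans
      (hσconv.2 (Set.mem_univ _) (Set.mem_univ _) ha hc hac)

/-- Input convexity of ICNNs: if the activation `σ` is convex and nondecreasing and
the hidden-layer weight matrices `W^{z,(l)}` (`l = 1,…,L−1`) as well as the final
weight matrix `W^{(L)}` are entrywise nonnegative, then every component of every
hidden layer `x ↦ z^{(l)}_i(x)` (`l ≤ L−1`) and every component of the output
`x ↦ (W^{(L)} z^{(L−1)}(x) + b^{(L)})_i` is convex on `ℝ^{d₀}`. -/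
theorem icnn_convex (σ : ℝ → ℝ) (hσconv : ConvexOn ℝ Set.univ σ) (hσmono : Monotone σ)
    (L : ℕ) (hL : 1 ≤ L) (dim : ℕ → ℕ) (dL : ℕ)
    (Wz : (l : ℕ) → Matrix (Fin (dim (l+1))) (Fin (dim l)) ℝ)
    (Wx : (l : ℕ) → Matrix (Fin (dim (l+1))) (Fin (dim 0)) ℝ)
    (b : (l : ℕ) → Fin (dim (l+1)) → ℝ)
    (hWz : ∀ l, l + 1 ≤ L - 1 → ∀ i j, 0 ≤ Wz l i j)
    (WL : Matrix (Fin dL) (Fin (dim (L-1))) ℝ) (hWL : ∀ i j, 0 ≤ WL i j)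
    (bL : Fin dL → ℝ) :
    (∀ l ≤ L - 1, ∀ i : Fin (dim l),
        ConvexOn ℝ Set.univ (fun x => icnn σ dim Wz Wx b l x i)) ∧
      (∀ i : Fin dL,
        ConvexOn ℝ Set.univ (fun x => (WL *ᵥ icnn σ dim Wz Wx b (L-1) x + bL) i)) := by
  have h := convexOn_icnn σ hσconv hσmono dim Wz Wx b (L - 1) hWz
  exact ⟨h, fun i =>
    (convexOn_mulVec_of_nonneg WL hWL _ (h (L - 1) le_rfl) i).add_const (bL i)⟩
end
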